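/- Let W be a finite reflection group with root system Φ, a a generic point, Φ⁺ = {α ∈ Φ : ⟨a,α⟩ > 0}, and Δ a simple system for Φ⁺. For I ⊆ Δ let W_I be the subgroup of W generated by {s_α : α ∈ I} and F_I = conv{u(a) : u ∈ W_I}. Then for every w ∈ W and every I ⊆ Δ, the set w(F_I) is an exposed face of the permutahedron conv{w(a) : w ∈ W}: there is a continuous linear functional l on V such that w(F_I) = {x ∈ conv(W·a) : l(y) ≤ l(x) for all y ∈ conv(W·a)}. -/

import Mathlib

/-!
Since `Δ` is linearly independent, some vector `l` satisfies `⟪l, δ⟫ = 0` for `δ ∈ I` and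
`⟪l, δ⟫ > 0` for `δ ∈ Δ \ I`. The functional `⟪l, ·⟫` exposes `F_I`, and the translates `w(F_I)`
are exposed too because `w` preserves the permutahedron.

An exposed face of a convex hull is the hull of the generators it contains, so one has to show that
`⟪l, g a⟫ ≤ ⟪l, a⟫` for `g ∈ W`, with equality only if `g ∈ W_I`. By the exchange condition, every
`g ∈ W` is reached from `1` by successive left multiplications by simple reflections `s_γ`, each
applied to some `h` with `⟪h a, γ⟫ > 0`. Such a step subtracts a positive multiple of `γ` from
`h a`, so it lowers `⟪l, ·⟫` strictly if `γ ∉ I` and leaves it unchanged if `γ ∈ I`.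
-/

open scoped RealInnerProductSpace

variable {V : Type*} [NormedAddCommGroup V] [InnerProductSpace ℝ V]

/-- `s` acts as the orthogonal reflection along the nonzero vector `α`:
`s v = v - 2 (⟪v,α⟫/⟪α,α⟫) α`. -/
def IsReflAlong (s : V ≃ₗᵢ[ℝ] V) (α : V) : Prop :=
  α ≠ 0 ∧ ∀ v : V, s v = v - ((2 * ⟪v, α⟫ / ⟪α, α⟫) • α)

/-- `s` is a reflection. -/
def IsReflection (s : V ≃ₗᵢ[ℝ] V) : Prop :=
  ∃ α : V, IsReflAlong s α

/-- A reflection group: a subgroup of the group of linear isometries of `V` generated by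
the reflections it contains. -/
def IsReflectionGroup (W : Subgroup (V ≃ₗᵢ[ℝ] V)) : Prop :=
  W = Subgroup.closure {s | IsReflection s ∧ s ∈ W}

/-- `a` is a generic point for `W`: it is fixed by no reflection belonging to `W`. -/
def IsGeneric (W : Subgroup (V ≃ₗᵢ[ℝ] V)) (a : V) : Prop :=
  ∀ s ∈ W, IsReflection s → s a ≠ a

/-- The `W`-orbit of the point `a`. -/
def orbitSet (W : Subgroup (V ≃ₗᵢ[ℝ] V)) (a : V) : Set V :=
  {x | ∃ w ∈ W, x = w a}

/-- The permutahedron `Perm^a(W)`: the convex hull of the `W`-orbit of `a`. -/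
noncomputable def permutahedron (W : Subgroup (V ≃ₗᵢ[ℝ] V)) (a : V) : Set V :=
  convexHull ℝ (orbitSet W a)

/-- A root system for `W`. -/
structure IsRootSystem (W : Subgroup (V ≃ₗᵢ[ℝ] V)) (Φ : Set V) : Prop where
  finite : Φ.Finite
  nonempty : Φ.Nonempty
  ne_zero : ∀ α ∈ Φ, α ≠ 0
  gen : W = Subgroup.closure {s | ∃ α ∈ Φ, IsReflAlong s α}
  line : ∀ α ∈ Φ, {β ∈ Φ | ∃ t : ℝ, β = t • α} = {α, -α}
  stable : ∀ w ∈ W, (⇑w) '' Φ = Φ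

/-- The positive system determined by the generic point `a`: roots `α` with `⟪a, α⟫ > 0`. -/
def posSystem (a : V) (Φ : Set V) : Set V :=
  {α ∈ Φ | 0 < ⟪a, α⟫}

/-- `Δ` is a simple system for the positive system `Φp`: `Δ ⊆ Φp` is linearly independent and
every element of `Φp` is a linear combination of `Δ` with nonnegative coefficients. -/
def IsSimpleSystem (Φp Δ : Set V) : Prop :=
  Δ ⊆ Φp ∧ LinearIndependent ℝ ((↑) : Δ → V) ∧
    ∀ β ∈ Φp, ∃ c : V →₀ ℝ, (c.support : Set V) ⊆ Δ ∧ (∀ v : V, 0 ≤ c v) ∧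
      β = c.sum fun v r => r • v

/-- The subgroup generated by the reflections along the vectors of `I`. -/
def genSubgroup (I : Set V) : Subgroup (V ≃ₗᵢ[ℝ] V) :=
  Subgroup.closure {s | ∃ β ∈ I, IsReflAlong s β}

/-! ### Faces of convex hulls -/

section ConvexHull

variable {𝕜 E : Type*} [Field 𝕜] [LinearOrder 𝕜] [IsStrictOrderedRing 𝕜] [AddCommGroup E]
  [Module 𝕜 E] {s : Set E} {M : 𝕜}

lemma convexHull_sep_eq_of_le (l : E →ₗ[𝕜] 𝕜) (hle : ∀ x ∈ s, l x ≤ M) :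
    convexHull 𝕜 {x ∈ s | l x = M} = {x ∈ convexHull 𝕜 s | l x = M} := by
  apply Set.Subset.antisymm
  · exact Set.subset_inter (convexHull_mono fun x hx => hx.1)
      (convexHull_min (fun x hx => hx.2) (convex_hyperplane l.isLinear M))
  · rintro x ⟨hx, hlx⟩
    obtain ⟨ι, _, c, z, hc, hc_sum, hz, rfl⟩ := mem_convexHull_iff_exists_fintype.1 hx
    have hterm : ∀ i, 0 ≤ c i * (M - l (z i)) := fun i =>
      mul_nonneg (hc i) (sub_nonneg.2 (hle _ (hz i)))
    have hsum : ∑ i, c i * (M - l (z i)) = 0 := by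
      simp only [map_sum, map_smul, smul_eq_mul] at hlx
      simp only [mul_sub, Finset.sum_sub_distrib, ← Finset.sum_mul, hc_sum, hlx, one_mul, sub_self]
    have hlevel : ∀ i, c i ≠ 0 → l (z i) = M := fun i hi => by
      have h := (Finset.sum_eq_zero_iff_of_nonneg fun i _ => hterm i).1 hsum i (Finset.mem_univ i)
      exact (sub_eq_zero.1 ((mul_eq_zero.1 h).resolve_left hi)).symm
    rw [← finsum_eq_sum_of_fintype] at hc_sum ⊢
    exact (convex_convexHull 𝕜 _).finsum_mem hc hc_sum fun i hi =>
      subset_convexHull 𝕜 _ ⟨hz i, hlevel i hi⟩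

lemma isExposed_convexHull_sep [TopologicalSpace 𝕜] [TopologicalSpace E] (l : StrongDual 𝕜 E)
    (hle : ∀ x ∈ s, l x ≤ M) :
    IsExposed 𝕜 (convexHull 𝕜 s) (convexHull 𝕜 {x ∈ s | l x = M}) := by
  intro hne
  obtain ⟨z, hz, hlz⟩ := convexHull_nonempty_iff.1 hne
  have hle_hull : ∀ x ∈ convexHull 𝕜 s, l x ≤ M :=
    convexHull_min hle (convex_halfSpace_le l.toLinearMap.isLinear M)
  refine ⟨l, (convexHull_sep_eq_of_le l.toLinearMap hle).trans (Set.ext fun x => ?_)⟩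
  refine and_congr_right fun hx => ⟨fun hlx y hy => (hle_hull y hy).trans hlx.ge, fun hmax => ?_⟩
  exact (hle_hull x hx).antisymm (hlz.symm.trans_le (hmax z (subset_convexHull 𝕜 s hz)))

end ConvexHull

lemma isExposed_image {𝕜 E F : Type*} [TopologicalSpace 𝕜] [Semiring 𝕜] [Preorder 𝕜]
    [AddCommMonoid E] [TopologicalSpace E] [Module 𝕜 E]
    [AddCommMonoid F] [TopologicalSpace F] [Module 𝕜 F]
    {A B : Set E} (h : IsExposed 𝕜 A B) (e : E ≃L[𝕜] F) : IsExposed 𝕜 (e '' A) (e '' B) := by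
  intro hne
  obtain ⟨l, rfl⟩ := h hne.of_image
  refine ⟨l.comp e.symm.toContinuousLinearMap, ?_⟩
  ext x
  obtain ⟨x, rfl⟩ := e.surjective x
  simp [e.injective.mem_set_image]

/-! ### Reflections -/

/-- The reflection `s_α` of the root system literature, defined for every `α` (the identity for
`α = 0`) so that it can be used as a function of the root. -/
noncomputable abbrev rootReflection (α : V) : V ≃ₗᵢ[ℝ] V := (ℝ ∙ α)ᗮ.reflection

lemma rootReflection_apply (α v : V) :
    rootReflection α v = v - (2 * ⟪v, α⟫ / ⟪α, α⟫) • α := by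
  rw [Submodule.reflection_orthogonal_apply, Submodule.reflection_singleton_apply,
    real_inner_self_eq_norm_sq, real_inner_comm]
  simp only [RCLike.ofReal_real_eq_id, id_eq, neg_sub, ← Nat.cast_smul_eq_nsmul ℝ, smul_smul]
  rw [Nat.cast_ofNat, mul_div_assoc]

lemma isReflAlong_iff {s : V ≃ₗᵢ[ℝ] V} {α : V} :
    IsReflAlong s α ↔ α ≠ 0 ∧ s = rootReflection α := by
  simp only [IsReflAlong, LinearIsometryEquiv.ext_iff, rootReflection_apply]

lemma rootReflection_neg (α : V) : rootReflection (-α) = rootReflection α := by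
  ext v
  simp only [rootReflection_apply, inner_neg_right, inner_neg_left, neg_neg, mul_neg, neg_div,
    smul_neg, neg_smul]

lemma rootReflection_mul_cancel_left (α : V) (g : V ≃ₗᵢ[ℝ] V) :
    rootReflection α * (rootReflection α * g) = g := by
  rw [← mul_assoc, Submodule.reflection_mul_reflection, one_mul]

lemma inner_rootReflection_comm (α x y : V) :
    ⟪rootReflection α x, y⟫ = ⟪x, rootReflection α y⟫ := by
  rw [LinearIsometryEquiv.inner_map_eq_flip, Submodule.reflection_symm]

lemma inner_rootReflection_right (α x y : V) :
    ⟪x, rootReflection α y⟫ = ⟪x, y⟫ - 2 * ⟪y, α⟫ / ⟪α, α⟫ * ⟪x, α⟫ := by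
  rw [rootReflection_apply, inner_sub_right, real_inner_smul_right]

lemma rootReflection_map (w : V ≃ₗᵢ[ℝ] V) (α : V) :
    rootReflection (w α) = w * rootReflection α * w⁻¹ := by
  ext v
  obtain ⟨v, rfl⟩ := w.surjective v
  simp [rootReflection_apply, LinearIsometryEquiv.inner_map_map]

lemma rootReflection_mem_genSubgroup {I : Set V} {α : V} (hα : α ∈ I) (h0 : α ≠ 0) :
    rootReflection α ∈ genSubgroup I :=
  Subgroup.subset_closure ⟨α, hα, isReflAlong_iff.2 ⟨h0, rfl⟩⟩

lemma genSubgroup_le {I : Set V} {H : Subgroup (V ≃ₗᵢ[ℝ] V)}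
    (h : ∀ α ∈ I, rootReflection α ∈ H) : genSubgroup I ≤ H := by
  refine (Subgroup.closure_le H).2 ?_
  rintro s ⟨α, hα, hs⟩
  exact (isReflAlong_iff.1 hs).2 ▸ h α hα

lemma genSubgroup_mono {I J : Set V} (h : I ⊆ J) : genSubgroup I ≤ genSubgroup J :=
  Subgroup.closure_mono fun _ ⟨α, hα, hs⟩ => ⟨α, h hα, hs⟩

lemma apply_eq_self_of_mem_genSubgroup {I : Set V} {l : V} (hl : ∀ δ ∈ I, ⟪l, δ⟫ = 0)
    {u : V ≃ₗᵢ[ℝ] V} (hu : u ∈ genSubgroup I) : u l = l := by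
  induction hu using Subgroup.closure_induction with
  | mem s hs =>
    obtain ⟨δ, hδ, hs⟩ := hs
    simp [hs.2, hl δ hδ]
  | one => rfl
  | mul u v _ _ hu hv => rw [LinearIsometryEquiv.coe_mul, Function.comp_apply, hv, hu]
  | inv u _ hu => rw [LinearIsometryEquiv.coe_inv, LinearIsometryEquiv.symm_apply_eq, hu]

lemma inner_apply_of_mem_genSubgroup {I : Set V} {l : V} (hl : ∀ δ ∈ I, ⟪l, δ⟫ = 0)
    {u : V ≃ₗᵢ[ℝ] V} (hu : u ∈ genSubgroup I) (x : V) : ⟪l, u x⟫ = ⟪l, x⟫ := by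
  rw [← u.inner_map_map l x, apply_eq_self_of_mem_genSubgroup hl hu]

/-! ### Dominant vectors -/

/-- A dominant vector: one lying in the closed fundamental chamber of the simple system `Δ`. -/
def IsDominant (Δ : Set V) (l : V) : Prop := ∀ δ ∈ Δ, 0 ≤ ⟪l, δ⟫

lemma exists_forall_inner_eq {ι : Type*} [Finite ι] {v : ι → V} (hv : LinearIndependent ℝ v)
    (f : ι → ℝ) : ∃ l : V, ∀ i, ⟪l, v i⟫ = f i := by
  let b := Module.Basis.span hv
  have : FiniteDimensional ℝ (Submodule.span ℝ (Set.range v)) := b.finiteDimensional_of_finite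
  let φ : StrongDual ℝ (Submodule.span ℝ (Set.range v)) := (b.constr ℝ f).toContinuousLinearMap
  refine ⟨(InnerProductSpace.toDual ℝ (Submodule.span ℝ (Set.range v))).symm φ, fun i => ?_⟩
  rw [← Module.Basis.coe_span_apply hv i, ← Submodule.coe_inner,
    InnerProductSpace.toDual_symm_apply]
  exact b.constr_basis ℝ f i

namespace IsSimpleSystem

variable {P Δ : Set V}

lemma exists_isDominant_sep_eq (hΔ : IsSimpleSystem P Δ) (hfin : Δ.Finite) {I : Set V}
    (hI : I ⊆ Δ) : ∃ l, IsDominant Δ l ∧ {δ ∈ Δ | ⟪l, δ⟫ = 0} = I := by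
  classical
  have := hfin.to_subtype
  obtain ⟨l, hl⟩ := exists_forall_inner_eq hΔ.2.1 fun δ => if (δ : V) ∈ I then 0 else 1
  have hl' : ∀ δ ∈ Δ, ⟪l, δ⟫ = if δ ∈ I then 0 else 1 := fun δ hδ => hl ⟨δ, hδ⟩
  refine ⟨l, fun δ hδ => ?_, Set.ext fun δ => ⟨fun ⟨hδ, h0⟩ => ?_, fun hδ => ⟨hI hδ, ?_⟩⟩⟩
  · rw [hl' δ hδ]
    split_ifs <;> norm_num
  · rw [hl' δ hδ] at h0
    by_contra hδI
    simp [hδI] at h0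
  · rw [hl' δ (hI hδ), if_pos hδ]

lemma inner_nonneg (hΔ : IsSimpleSystem P Δ) {l β : V} (hl : IsDominant Δ l) (hβ : β ∈ P) :
    0 ≤ ⟪l, β⟫ := by
  obtain ⟨c, hcΔ, hc, rfl⟩ := hΔ.2.2 β hβ
  simp only [Finsupp.sum, inner_sum, real_inner_smul_right]
  exact Finset.sum_nonneg fun δ hδ => mul_nonneg (hc δ) (hl δ (hcΔ hδ))

lemma mem_span_of_inner_eq_zero (hΔ : IsSimpleSystem P Δ) {l β : V} (hl : IsDominant Δ l)
    (hβ : β ∈ P) (h0 : ⟪l, β⟫ = 0) : β ∈ Submodule.span ℝ {δ ∈ Δ | ⟪l, δ⟫ = 0} := by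
  obtain ⟨c, hcΔ, hc, rfl⟩ := hΔ.2.2 β hβ
  simp only [Finsupp.sum, inner_sum, real_inner_smul_right] at h0
  have hterm := (Finset.sum_eq_zero_iff_of_nonneg fun δ hδ =>
    mul_nonneg (hc δ) (hl δ (hcΔ hδ))).1 h0
  refine Submodule.sum_mem _ fun δ hδ => Submodule.smul_mem _ _ (Submodule.subset_span ?_)
  exact ⟨hcΔ hδ, (mul_eq_zero.1 (hterm δ hδ)).resolve_left (Finsupp.mem_support_iff.1 hδ)⟩

end IsSimpleSystem

/-! ### Root systems -/

section RootSystem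

variable {W : Subgroup (V ≃ₗᵢ[ℝ] V)} {Φ Δ : Set V} {a l : V}

namespace IsRootSystem

lemma eq_genSubgroup (hΦ : IsRootSystem W Φ) : W = genSubgroup Φ := hΦ.gen

lemma rootReflection_mem (hΦ : IsRootSystem W Φ) {α : V} (hα : α ∈ Φ) : rootReflection α ∈ W :=
  hΦ.eq_genSubgroup ▸ rootReflection_mem_genSubgroup hα (hΦ.ne_zero α hα)

lemma map_mem (hΦ : IsRootSystem W Φ) {w : V ≃ₗᵢ[ℝ] V} (hw : w ∈ W) {α : V} (hα : α ∈ Φ) :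
    w α ∈ Φ :=
  hΦ.stable w hw ▸ Set.mem_image_of_mem w hα

lemma neg_mem (hΦ : IsRootSystem W Φ) {α : V} (hα : α ∈ Φ) : -α ∈ Φ := by
  have h : -α ∈ {β ∈ Φ | ∃ t : ℝ, β = t • α} := hΦ.line α hα ▸ Set.mem_insert_of_mem α rfl
  exact h.1

lemma inner_ne_zero (hΦ : IsRootSystem W Φ) (ha : IsGeneric W a) {α : V} (hα : α ∈ Φ) :
    ⟪a, α⟫ ≠ 0 := by
  intro h0
  refine ha _ (hΦ.rootReflection_mem hα) ⟨α, isReflAlong_iff.2 ⟨hΦ.ne_zero α hα, rfl⟩⟩ ?_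
  rw [rootReflection_apply, h0, mul_zero, zero_div, zero_smul, sub_zero]

lemma mem_posSystem_or_neg_mem (hΦ : IsRootSystem W Φ) (ha : IsGeneric W a) {α : V}
    (hα : α ∈ Φ) : α ∈ posSystem a Φ ∨ -α ∈ posSystem a Φ := by
  rcases (hΦ.inner_ne_zero ha hα).lt_or_gt with h | h
  · exact .inr ⟨hΦ.neg_mem hα, by rwa [inner_neg_right, neg_pos]⟩
  · exact .inl ⟨hα, h⟩

lemma eq_of_mem_posSystem_of_mem_span (hΦ : IsRootSystem W Φ) {α β : V}
    (hα : α ∈ posSystem a Φ) (hβ : β ∈ posSystem a Φ) (h : β ∈ Submodule.span ℝ {α}) :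
    β = α := by
  obtain ⟨t, rfl⟩ := Submodule.mem_span_singleton.1 h
  have hline : t • α ∈ ({α, -α} : Set V) := hΦ.line α hα.1 ▸ ⟨hβ.1, t, rfl⟩
  refine hline.resolve_right fun hneg => ?_
  have hpos := hβ.2
  rw [hneg, inner_neg_right, neg_pos] at hpos
  exact hpos.not_gt hα.2

/-- Take `l` dominant and orthogonal to no simple root other than `α`. Then `⟪l, s_α β⟫ = ⟪l, β⟫`,
so if `s_α β` were negative, `l` would be orthogonal to `β`, making `β` a multiple of `α`. -/
lemma rootReflection_mem_posSystem (hΦ : IsRootSystem W Φ) (ha : IsGeneric W a)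
    (hΔ : IsSimpleSystem (posSystem a Φ) Δ) {α β : V} (hα : α ∈ Δ) (hβ : β ∈ posSystem a Φ)
    (hne : β ≠ α) : rootReflection α β ∈ posSystem a Φ := by
  have hα_pos := hΔ.1 hα
  have hmem : rootReflection α β ∈ Φ := hΦ.map_mem (hΦ.rootReflection_mem hα_pos.1) hβ.1
  refine (hΦ.mem_posSystem_or_neg_mem ha hmem).resolve_right fun hneg => hne ?_
  have hΔ_fin : Δ.Finite := hΦ.finite.subset fun δ hδ => (hΔ.1 hδ).1
  obtain ⟨l, hl, hlα⟩ := hΔ.exists_isDominant_sep_eq hΔ_fin (Set.singleton_subset_iff.2 hα)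
  have hlα0 : ⟪l, α⟫ = 0 := (hlα.ge rfl).2
  have hlβ : ⟪l, β⟫ = 0 := by
    have h := hΔ.inner_nonneg hl hneg
    rw [inner_neg_right, inner_rootReflection_right, hlα0, mul_zero, sub_zero] at h
    linarith [hΔ.inner_nonneg hl hβ]
  exact hΦ.eq_of_mem_posSystem_of_mem_span hα_pos hβ
    (hlα ▸ hΔ.mem_span_of_inner_eq_zero hl hβ hlβ)

/-- As long as a positive root `γ` is not simple, some simple reflection lowers its height
`⟪a, γ⟫`. -/
lemma exists_mem_genSubgroup_map_mem (hΦ : IsRootSystem W Φ) (ha : IsGeneric W a)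
    (hΔ : IsSimpleSystem (posSystem a Φ) Δ) {β : V} (hβ : β ∈ posSystem a Φ) :
    ∃ u ∈ genSubgroup Δ, u β ∈ Δ := by
  let S : Set V := {γ ∈ posSystem a Φ | ∃ u ∈ genSubgroup Δ, u β = γ}
  have hS : S.Finite := hΦ.finite.subset fun γ hγ => hγ.1.1
  obtain ⟨γ, ⟨hγ, u, hu, rfl⟩, hmin⟩ :=
    Set.exists_min_image S (fun γ => ⟪a, γ⟫) hS ⟨β, hβ, 1, one_mem _, rfl⟩
  refine ⟨u, hu, ?_⟩
  by_contra hnot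
  have hdom : IsDominant Δ (-u β) := by
    intro δ hδ
    have hδ_pos := hΔ.1 hδ
    have hδ0 := hΦ.ne_zero δ hδ_pos.1
    have hle : ⟪a, u β⟫ ≤ ⟪a, rootReflection δ (u β)⟫ :=
      hmin _ ⟨hΦ.rootReflection_mem_posSystem ha hΔ hδ hγ fun h => hnot (h ▸ hδ),
        rootReflection δ * u, mul_mem (rootReflection_mem_genSubgroup hδ hδ0) hu, rfl⟩
    rw [inner_rootReflection_right, le_sub_self_iff] at hle
    have hle0 : ⟪u β, δ⟫ ≤ 0 := by
      by_contra! hpos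
      have hδδ := real_inner_self_pos.2 hδ0
      have haδ := hδ_pos.2
      exact hle.not_gt (by positivity)
    rwa [inner_neg_left, neg_nonneg]
  have hnonneg := hΔ.inner_nonneg hdom hγ
  rw [inner_neg_left] at hnonneg
  linarith [real_inner_self_pos.2 (hΦ.ne_zero _ hγ.1)]

lemma eq_genSubgroup_simple (hΦ : IsRootSystem W Φ) (ha : IsGeneric W a)
    (hΔ : IsSimpleSystem (posSystem a Φ) Δ) : W = genSubgroup Δ := by
  have hpos : ∀ β ∈ posSystem a Φ, rootReflection β ∈ genSubgroup Δ := fun β hβ => by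
    obtain ⟨u, hu, huβ⟩ := hΦ.exists_mem_genSubgroup_map_mem ha hΔ hβ
    have h := rootReflection_mem_genSubgroup huβ (hΦ.ne_zero _ (hΔ.1 huβ).1)
    rwa [rootReflection_map, Subgroup.mul_mem_cancel_right _ (inv_mem hu),
      Subgroup.mul_mem_cancel_left _ hu] at h
  rw [hΦ.eq_genSubgroup]
  refine le_antisymm (genSubgroup_le fun β hβ => ?_) (genSubgroup_mono fun δ hδ => (hΔ.1 hδ).1)
  rcases hΦ.mem_posSystem_or_neg_mem ha hβ with h | h
  · exact hpos β h
  · exact rootReflection_neg β ▸ hpos (-β) h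

end IsRootSystem

/-! ### Words in the simple reflections -/

/-- `IsWord Δ n g`: `g` is a product of `n` reflections along vectors of `Δ`, not necessarily
reduced. The word is built by multiplication on the left. -/
inductive IsWord (Δ : Set V) : ℕ → (V ≃ₗᵢ[ℝ] V) → Prop
  | one : IsWord Δ 0 1
  | mul {n : ℕ} {g : V ≃ₗᵢ[ℝ] V} {γ : V} (hγ : γ ∈ Δ) (hg : IsWord Δ n g) :
      IsWord Δ (n + 1) (rootReflection γ * g)

lemma exists_isWord {g : V ≃ₗᵢ[ℝ] V} (hg : g ∈ genSubgroup Δ) : ∃ n, IsWord Δ n g := by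
  induction hg using Subgroup.closure_induction_left with
  | one => exact ⟨0, .one⟩
  | mul_left s hs g _ ih =>
    obtain ⟨γ, hγ, hs⟩ := hs
    obtain ⟨n, hn⟩ := ih
    exact ⟨n + 1, (isReflAlong_iff.1 hs).2 ▸ .mul hγ hn⟩
  | inv_mul_cancel s hs g _ ih =>
    obtain ⟨γ, hγ, hs⟩ := hs
    obtain ⟨n, hn⟩ := ih
    rw [(isReflAlong_iff.1 hs).2, Submodule.reflection_inv]
    exact ⟨n + 1, .mul hγ hn⟩

/-- The exchange condition: `⟪g a, β⟫ < 0` says that `g⁻¹ β` is a negative root. -/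
lemma IsWord.exchange (hΦ : IsRootSystem W Φ) (ha : IsGeneric W a)
    (hΔ : IsSimpleSystem (posSystem a Φ) Δ) {n : ℕ} {g : V ≃ₗᵢ[ℝ] V} (hg : IsWord Δ n g) {β : V}
    (hβ : β ∈ posSystem a Φ) (hneg : ⟪g a, β⟫ < 0) :
    ∃ m < n, IsWord Δ m (rootReflection β * g) := by
  induction hg generalizing β with
  | one => exact absurd hβ.2 hneg.not_gt
  | @mul n g γ hγ hg ih =>
    rcases eq_or_ne β γ with rfl | hne
    · exact ⟨n, n.lt_succ_self, by rwa [rootReflection_mul_cancel_left]⟩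
    · have hpos := hΦ.rootReflection_mem_posSystem ha hΔ hγ hβ hne
      obtain ⟨m, hm, hword⟩ := ih hpos (by rwa [← inner_rootReflection_comm])
      refine ⟨m + 1, Nat.succ_lt_succ hm, ?_⟩
      have h := hword.mul hγ
      rwa [rootReflection_map, Submodule.reflection_inv, mul_assoc, mul_assoc,
        rootReflection_mul_cancel_left] at h

/-- By exchange, a last step `s_γ h` with `⟪h a, γ⟫ < 0` can be traded for a shorter word. -/
lemma IsRootSystem.ascending_induction (hΦ : IsRootSystem W Φ) (ha : IsGeneric W a)
    (hΔ : IsSimpleSystem (posSystem a Φ) Δ) {p : (V ≃ₗᵢ[ℝ] V) → Prop} (one : p 1)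
    (mul : ∀ γ ∈ Δ, ∀ h : V ≃ₗᵢ[ℝ] V, 0 < ⟪h a, γ⟫ → p h → p (rootReflection γ * h))
    {g : V ≃ₗᵢ[ℝ] V} (hg : g ∈ W) : p g := by
  obtain ⟨n, hn⟩ := exists_isWord (hΦ.eq_genSubgroup_simple ha hΔ ▸ hg)
  induction n using Nat.strong_induction_on generalizing g with
  | _ n ih =>
    cases hn with
    | one => exact one
    | @mul n h γ hγ hh =>
      have hγ_pos := hΔ.1 hγ
      have hhW : h ∈ W := (Subgroup.mul_mem_cancel_left W (hΦ.rootReflection_mem hγ_pos.1)).1 hg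
      have hne : ⟪h a, γ⟫ ≠ 0 := by
        rw [LinearIsometryEquiv.inner_map_eq_flip]
        exact hΦ.inner_ne_zero ha (hΦ.map_mem (inv_mem hhW) hγ_pos.1)
      rcases hne.lt_or_gt with hneg | hpos
      · obtain ⟨m, hm, hword⟩ := hh.exchange hΦ ha hΔ hγ_pos hneg
        exact ih m (hm.trans n.lt_succ_self) hg hword
      · exact mul γ hγ h hpos (ih n n.lt_succ_self hhW hh)

/-! ### Faces of the permutahedron -/

lemma mem_genSubgroup_or_inner_lt (hΦ : IsRootSystem W Φ) (ha : IsGeneric W a)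
    (hΔ : IsSimpleSystem (posSystem a Φ) Δ) (hl : IsDominant Δ l) {g : V ≃ₗᵢ[ℝ] V} (hg : g ∈ W) :
    g ∈ genSubgroup {δ ∈ Δ | ⟪l, δ⟫ = 0} ∨ ⟪l, g a⟫ < ⟪l, a⟫ := by
  refine hΦ.ascending_induction ha hΔ
    (p := fun g => g ∈ genSubgroup {δ ∈ Δ | ⟪l, δ⟫ = 0} ∨ ⟪l, g a⟫ < ⟪l, a⟫)
    (.inl (one_mem _)) (fun γ hγ h hpos ih => ?_) hg
  have hγ0 := hΦ.ne_zero γ (hΔ.1 hγ).1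
  have hstep : ⟪l, (rootReflection γ * h) a⟫ =
      ⟪l, h a⟫ - 2 * ⟪h a, γ⟫ / ⟪γ, γ⟫ * ⟪l, γ⟫ := inner_rootReflection_right γ l (h a)
  rcases (hl γ hγ).eq_or_lt with hlγ | hlγ
  · refine ih.imp (mul_mem (rootReflection_mem_genSubgroup ⟨hγ, hlγ.symm⟩ hγ0)) fun hlt => ?_
    rwa [hstep, ← hlγ, mul_zero, sub_zero]
  · have hle : ⟪l, h a⟫ ≤ ⟪l, a⟫ :=
      ih.elim (fun hh => (inner_apply_of_mem_genSubgroup (fun δ hδ => hδ.2) hh a).le) le_of_lt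
    have hγγ := real_inner_self_pos.2 hγ0
    have hdrop : 0 < 2 * ⟪h a, γ⟫ / ⟪γ, γ⟫ * ⟪l, γ⟫ := by positivity
    exact .inr (by linarith)

lemma orbitSet_genSubgroup_eq_sep (hΦ : IsRootSystem W Φ) (ha : IsGeneric W a)
    (hΔ : IsSimpleSystem (posSystem a Φ) Δ) (hl : IsDominant Δ l) :
    orbitSet (genSubgroup {δ ∈ Δ | ⟪l, δ⟫ = 0}) a = {x ∈ orbitSet W a | ⟪l, x⟫ = ⟪l, a⟫} := by
  have hle : genSubgroup {δ ∈ Δ | ⟪l, δ⟫ = 0} ≤ W :=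
    hΦ.eq_genSubgroup ▸ genSubgroup_mono fun δ hδ => (hΔ.1 hδ.1).1
  apply Set.Subset.antisymm
  · rintro _ ⟨u, hu, rfl⟩
    exact ⟨⟨u, hle hu, rfl⟩, inner_apply_of_mem_genSubgroup (fun δ hδ => hδ.2) hu a⟩
  · rintro _ ⟨⟨g, hg, rfl⟩, hga⟩
    exact ⟨g, (mem_genSubgroup_or_inner_lt hΦ ha hΔ hl hg).resolve_right hga.not_lt, rfl⟩

lemma isExposed_permutahedron_genSubgroup (hΦ : IsRootSystem W Φ) (ha : IsGeneric W a)
    (hΔ : IsSimpleSystem (posSystem a Φ) Δ) (hl : IsDominant Δ l) :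
    IsExposed ℝ (permutahedron W a)
      (permutahedron (genSubgroup {δ ∈ Δ | ⟪l, δ⟫ = 0}) a) := by
  have hle : ∀ x ∈ orbitSet W a, innerSL ℝ l x ≤ ⟪l, a⟫ := by
    rintro _ ⟨g, hg, rfl⟩
    rcases mem_genSubgroup_or_inner_lt hΦ ha hΔ hl hg with hu | hlt
    · exact (inner_apply_of_mem_genSubgroup (fun δ hδ => hδ.2) hu a).le
    · exact hlt.le
  rw [permutahedron, permutahedron, orbitSet_genSubgroup_eq_sep hΦ ha hΔ hl]
  exact isExposed_convexHull_sep (innerSL ℝ l) hle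

end RootSystem

lemma image_permutahedron {W : Subgroup (V ≃ₗᵢ[ℝ] V)} {w : V ≃ₗᵢ[ℝ] V} (hw : w ∈ W) (a : V) :
    w '' permutahedron W a = permutahedron W a := by
  have horbit : w '' orbitSet W a = orbitSet W a := by
    apply Set.Subset.antisymm
    · rintro _ ⟨_, ⟨g, hg, rfl⟩, rfl⟩
      exact ⟨w * g, mul_mem hw hg, rfl⟩
    · rintro _ ⟨g, hg, rfl⟩
      exact ⟨_, ⟨w⁻¹ * g, mul_mem (inv_mem hw) hg, rfl⟩, w.apply_symm_apply (g a)⟩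
  rw [permutahedron]
  conv_rhs => rw [← horbit]
  exact w.toLinearEquiv.toLinearMap.image_convexHull _

theorem face_translate_isExposed_general (W : Subgroup (V ≃ₗᵢ[ℝ] V))
    (Φ : Set V) (hΦ : IsRootSystem W Φ) (a : V) (ha : IsGeneric W a)
    (Δ : Set V) (hΔ : IsSimpleSystem (posSystem a Φ) Δ) :
    ∀ w ∈ W, ∀ I ⊆ Δ,
      IsExposed ℝ (permutahedron W a) ((⇑w) '' permutahedron (genSubgroup I) a) := by
  intro w hw I hI
  have hΔ_fin : Δ.Finite := hΦ.finite.subset fun δ hδ => (hΔ.1 hδ).1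
  obtain ⟨l, hl, rfl⟩ := hΔ.exists_isDominant_sep_eq hΔ_fin hI
  rw [← image_permutahedron hw a]
  exact isExposed_image (isExposed_permutahedron_genSubgroup hΦ ha hΔ hl)
    w.toContinuousLinearEquiv

/-- every translate `w(F_I)` (`w ∈ W`, `I ⊆ Δ`) is an exposed face of the
permutahedron. -/
theorem face_translate_isExposed [FiniteDimensional ℝ V]
    (W : Subgroup (V ≃ₗᵢ[ℝ] V)) (hWfin : (W : Set (V ≃ₗᵢ[ℝ] V)).Finite)
    (Φ : Set V) (hΦ : IsRootSystem W Φ) (a : V) (ha : IsGeneric W a)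
    (Δ : Set V) (hΔ : IsSimpleSystem (posSystem a Φ) Δ) :
    ∀ w ∈ W, ∀ I ⊆ Δ,
      IsExposed ℝ (permutahedron W a) ((⇑w) '' permutahedron (genSubgroup I) a) :=
  face_translate_isExposed_general W Φ hΦ a ha Δ hΔ
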